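/- Let G be a connected graph of order n and let k, λ, m be positive integers with m ≤ min{k, λ} + 1. If σ_m ≥ n − λ(k − m + 1), then t_k ≥ t_{k+1} − λ + 1. (Corollary 3) -/

import Mathlib

open SimpleGraph

variable {V : Type*}

/-- A set of vertices is independent in `G`. -/
def IsIndSet (G : SimpleGraph V) (s : Set V) : Prop :=
  ∀ ⦃u⦄, u ∈ s → ∀ ⦃v⦄, v ∈ s → ¬ G.Adj u v

/-- The number of end-vertices (vertices of degree one) of a subgraph `H`. -/
noncomputable def endVertexCount {G : SimpleGraph V} (H : G.Subgraph) : ℕ :=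
  {v : V | v ∈ H.verts ∧ (H.neighborSet v).ncard = 1}.ncard

/-- `H` is a cycle; a single vertex and a single edge are regarded as
simple cycles of orders 1 and 2, respectively. -/
def IsCycleSubgraph {G : SimpleGraph V} (H : G.Subgraph) : Prop :=
  H.Connected ∧ (H.verts.ncard ≤ 2 ∨ ∀ v ∈ H.verts, (H.neighborSet v).ncard = 2)

/-- `H` is a `k`-ended tree in `G`: a tree with at most `k` end-vertices (leaves);
a cycle is regarded as a 1-ended tree. -/
def IsKEndedTree (G : SimpleGraph V) (k : ℕ) (H : G.Subgraph) : Prop :=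
  (H.coe.IsTree ∧ endVertexCount H ≤ k) ∨ (1 ≤ k ∧ IsCycleSubgraph H)

/-- `t k`: the order of a largest `k`-ended tree in `G`. -/
noncomputable def maxKEndedOrder (G : SimpleGraph V) (k : ℕ) : ℕ :=
  sSup {n | ∃ H : G.Subgraph, IsKEndedTree G k H ∧ H.verts.ncard = n}

/-- `σ m`: the minimum degree sum over independent sets of `m` vertices of `G`,
and `+∞` if the independence number of `G` is less than `m`. -/
noncomputable def minDegreeSum (G : SimpleGraph V) [Fintype V] [DecidableRel G.Adj]
    (m : ℕ) : ℕ∞ :=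
  ⨅ s ∈ {s : Finset V | s.card = m ∧ IsIndSet G ↑s}, (∑ v ∈ s, G.degree v : ℕ∞)

/-- `T` restricted to `s` is a tree, and every edge of `T` lies inside `s`. -/
structure TreeOn (T : SimpleGraph V) (s : Set V) : Prop where
  mem : ∀ ⦃a b⦄, T.Adj a b → a ∈ s
  reach : ∀ ⦃a b⦄, a ∈ s → b ∈ s → T.Reachable a b
  acyclic : T.IsAcyclic

/-- The vertices having exactly one neighbour in `T`. -/
def leaves (T : SimpleGraph V) : Set V := {v | ∃ w, T.Adj v w ∧ ∀ w', T.Adj v w' → w' = w}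

/-- The vertex `v` has at most two neighbours in `T`. -/
def SmallDeg (T : SimpleGraph V) (v : V) : Prop :=
  ∀ ⦃a b c⦄, T.Adj v a → T.Adj v b → T.Adj v c → a = b ∨ a = c ∨ b = c

open Classical in
/-- The neighbour of `x` in the tree `T` on the way to `u` (and `u` itself when `x = u`). -/
noncomputable def toward (T : SimpleGraph V) (u x : V) : V :=
  if h : ∃ y, T.Adj x y ∧ T.dist u y + 1 = T.dist u x then h.choose else x

section Toward

variable {T : SimpleGraph V} {s : Set V}

theorem toward_self (T : SimpleGraph V) (u : V) : toward T u u = u := by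
  simp [toward]

theorem TreeOn.eq_of_dist (h : TreeOn T s) {u x y z : V} (hu : u ∈ s)
    (hxy : T.Adj x y) (hxz : T.Adj x z) (hy : T.dist u y + 1 = T.dist u x)
    (hz : T.dist u z + 1 = T.dist u x) : y = z := by
  obtain ⟨p, hp, hpl⟩ := (h.reach hu (h.mem hxy.symm)).exists_path_of_dist
  obtain ⟨q, hq, hql⟩ := (h.reach hu (h.mem hxz.symm)).exists_path_of_dist
  have key : ∀ {y : V} (p : T.Walk u y), p.length = T.dist u y → T.dist u y + 1 = T.dist u x →
      x ∉ p.support := by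
    intro y p hpl hy hx
    classical
    have h1 := SimpleGraph.dist_le (p.takeUntil x hx)
    have h2 := p.length_takeUntil_le_length hx
    omega
  have hp' := hp.concat (key p hpl hy) hxy.symm
  have hq' := hq.concat (key q hql hz) hxz.symm
  have e := congrArg Subtype.val ((h.acyclic.subsingleton_path u x).elim ⟨_, hp'⟩ ⟨_, hq'⟩)
  have e' := congrArg SimpleGraph.Walk.penultimate e
  simpa using e'

theorem TreeOn.toward_spec (h : TreeOn T s) {u x : V} (hu : u ∈ s) (hx : x ∈ s) (hne : x ≠ u) :
    T.Adj x (toward T u x) ∧ T.dist u (toward T u x) + 1 = T.dist u x := by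
  have hex : ∃ y, T.Adj x y ∧ T.dist u y + 1 = T.dist u x := by
    obtain ⟨p, hp⟩ := (h.reach hx hu).exists_walk_length_eq_dist
    cases p with
    | nil => exact absurd rfl hne
    | @cons _ y _ hxy q =>
      refine ⟨y, hxy, ?_⟩
      have h1 := SimpleGraph.dist_le q
      rw [SimpleGraph.Walk.length_cons] at hp
      rw [SimpleGraph.dist_comm (u := y)] at h1
      rw [SimpleGraph.dist_comm (u := x)] at hp
      have h2 := h.acyclic.dist_eq_dist_add_one_of_adj_of_reachable u hxy (h.reach hu hx)
      omega
  rw [toward, dif_pos hex]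
  exact hex.choose_spec

theorem TreeOn.toward_eq (h : TreeOn T s) {u a b : V} (hu : u ∈ s) (hab : T.Adj a b)
    (hd : T.dist u b + 1 = T.dist u a) : toward T u a = b := by
  have hne : a ≠ u := by rintro rfl; simp at hd
  obtain ⟨h1, h2⟩ := h.toward_spec hu (h.mem hab) hne
  exact h.eq_of_dist hu h1 hab h2 hd

theorem TreeOn.toward_or (h : TreeOn T s) {u a b : V} (hu : u ∈ s) (hab : T.Adj a b) :
    toward T u a = b ∨ toward T u b = a := by
  rcases h.acyclic.dist_eq_dist_add_one_of_adj_of_reachable u hab (h.reach hu (h.mem hab))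
    with hd | hd
  · exact .inl (h.toward_eq hu hab hd.symm)
  · exact .inr (h.toward_eq hu hab.symm hd.symm)

theorem TreeOn.dist_toward (h : TreeOn T s) {u a b : V} (hu : u ∈ s) (hab : T.Adj a b)
    (he : toward T u a = b) : T.dist u b + 1 = T.dist u a := by
  have hne : a ≠ u := by rintro rfl; rw [toward_self] at he; exact hab.ne he
  have := (h.toward_spec hu (h.mem hab) hne).2
  rwa [he] at this

theorem TreeOn.not_toward (h : TreeOn T s) {u a b : V} (hu : u ∈ s) (hab : T.Adj a b)
    (he : toward T u a = b) : toward T u b ≠ a := by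
  intro he'
  have := h.dist_toward hu hab he
  have := h.dist_toward hu hab.symm he'
  omega

theorem TreeOn.toward_mem (h : TreeOn T s) {u x : V} (hu : u ∈ s) (hx : x ∈ s) :
    toward T u x ∈ s := by
  by_cases hne : x = u
  · rw [hne, toward_self]; exact hu
  · exact h.mem (h.toward_spec hu hx hne).1.symm

/-- After removing the edge from `a` to `b`, its end `b` nearer to `u` is still joined to `u`. -/
theorem TreeOn.reachable_deleteEdges (h : TreeOn T s) {u a b : V} (hu : u ∈ s) (hab : T.Adj a b)
    (he : toward T u a = b) : (T.deleteEdges {s(a, b)}).Reachable b u := by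
  have hd := h.dist_toward hu hab he
  have key : ∀ n z, z ∈ s → T.dist u z = n → n < T.dist u a →
      (T.deleteEdges {s(a, b)}).Reachable z u := by
    intro n
    induction n with
    | zero =>
      intro z hz h0 _
      rw [(h.reach hu hz).dist_eq_zero_iff.1 h0]
    | succ n ih =>
      intro z hz hn hlt
      have hne : z ≠ u := by rintro rfl; simp at hn
      obtain ⟨h1, h2⟩ := h.toward_spec hu hz hne
      refine SimpleGraph.Reachable.trans (SimpleGraph.Adj.reachable ?_)
        (ih (toward T u z) (h.mem h1.symm) (by omega) (by omega))
      rw [SimpleGraph.deleteEdges_adj]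
      refine ⟨h1, ?_⟩
      have hza : z ≠ a := by rintro rfl; omega
      have hza' : toward T u z ≠ a := by intro e; rw [e] at h2; omega
      simp [hza, hza']
  exact key _ b (h.mem hab.symm) rfl (by omega)

theorem TreeOn.closed_eq (h : TreeOn T s) {P : Set V} {a : V} (ha : a ∈ s) (haP : a ∈ P)
    (hP : ∀ x ∈ P, ∀ y, T.Adj x y → y ∈ P) : s ⊆ P := by
  intro b hb
  have := h.reach ha hb
  rw [SimpleGraph.reachable_iff_reflTransGen] at this
  induction this with
  | refl => exact haP
  | tail _ hxy ih => exact hP _ (ih (h.mem hxy)) _ hxy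

end Toward

section Surgery

variable {T : SimpleGraph V} {s : Set V}

theorem leaves_subset (h : TreeOn T s) : leaves T ⊆ s := fun _ ⟨_, hw, _⟩ => h.mem hw

theorem leaf_unique {v a b : V} (hv : v ∈ leaves T) (ha : T.Adj v a) (hb : T.Adj v b) : a = b := by
  obtain ⟨w, _, hw⟩ := hv
  rw [hw a ha, hw b hb]

theorem smallDeg_of_leaf {v : V} (hv : v ∈ leaves T) : SmallDeg T v :=
  fun _ _ _ ha hb _ => .inl (leaf_unique hv ha hb)

/-- Replacing the edge `ab` of a tree by an edge `uv` joining its two sides gives a tree. -/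
theorem TreeOn.exchange (h : TreeOn T s) {a b u v : V} (hu : u ∈ s) (hv : v ∈ s)
    (hab : T.Adj a b) (hua : (T.deleteEdges {s(a, b)}).Reachable a u)
    (hvb : (T.deleteEdges {s(a, b)}).Reachable b v) :
    TreeOn (T.deleteEdges {s(a, b)} ⊔ SimpleGraph.edge u v) s := by
  have hnr : ¬ (T.deleteEdges {s(a, b)}).Reachable a b :=
    SimpleGraph.isAcyclic_iff_forall_adj_isBridge.1 h.acyclic hab
  have hnuv : ¬ (T.deleteEdges {s(a, b)}).Reachable u v := fun hr =>
    hnr (hua.trans (hr.trans hvb.symm))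
  have huv : u ≠ v := by rintro rfl; exact hnuv .rfl
  refine ⟨?_, ?_, (h.acyclic.anti (SimpleGraph.deleteEdges_le _)).sup_edge_of_not_reachable hnuv⟩
  · intro x y hxy
    rw [SimpleGraph.sup_adj, SimpleGraph.deleteEdges_adj, SimpleGraph.edge_adj] at hxy
    rcases hxy with hxy | ⟨⟨rfl, -⟩ | ⟨rfl, -⟩, -⟩
    · exact h.mem hxy.1
    · exact hu
    · exact hv
  · have hle : T.deleteEdges {s(a, b)} ≤ T.deleteEdges {s(a, b)} ⊔ SimpleGraph.edge u v :=
      le_sup_left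
    have hab' : (T.deleteEdges {s(a, b)} ⊔ SimpleGraph.edge u v).Reachable a b := by
      refine (hua.mono hle).trans (.trans (SimpleGraph.Adj.reachable ?_) (hvb.mono hle).symm)
      rw [SimpleGraph.sup_adj, SimpleGraph.edge_adj]
      exact .inr ⟨.inl ⟨rfl, rfl⟩, huv⟩
    intro x y hx hy
    have := h.reach hx hy
    rw [SimpleGraph.reachable_iff_reflTransGen] at this
    clear hy
    induction this with
    | refl => rfl
    | @tail c d _ hcd ih =>
      refine ih.trans ?_
      by_cases he : s(c, d) = s(a, b)
      · rw [Sym2.eq_iff] at he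
        rcases he with ⟨rfl, rfl⟩ | ⟨rfl, rfl⟩
        · exact hab'
        · exact hab'.symm
      · refine SimpleGraph.Adj.reachable (hle ?_)
        rw [SimpleGraph.deleteEdges_adj]
        exact ⟨hcd, he⟩

/-- Removing a leaf from a tree gives a tree. -/
theorem TreeOn.delete_leaf (h : TreeOn T s) {u : V} (hu : u ∈ leaves T) :
    TreeOn (T.deleteIncidenceSet u) (s \ {u}) := by
  have hadj : ∀ x y, (T.deleteIncidenceSet u).Adj x y ↔ T.Adj x y ∧ x ≠ u ∧ y ≠ u := by
    intro x y; rw [SimpleGraph.deleteIncidenceSet_adj]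
  refine ⟨fun x y hxy => ⟨h.mem ((hadj _ _).1 hxy).1, ((hadj _ _).1 hxy).2.1⟩, ?_,
    h.acyclic.anti (SimpleGraph.deleteIncidenceSet_le _ _)⟩
  obtain ⟨w, huw, hw⟩ := id hu
  rintro a b ⟨ha, hau⟩ ⟨hb, hbu⟩
  have := h.reach ha hb
  rw [SimpleGraph.reachable_iff_reflTransGen] at this
  have key : (b ≠ u → (T.deleteIncidenceSet u).Reachable a b) ∧
      (b = u → (T.deleteIncidenceSet u).Reachable a w) := by
    clear hb hbu
    induction this with
    | refl => exact ⟨fun _ => .rfl, fun e => absurd e hau⟩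
    | @tail c d _ hcd ih =>
      by_cases hcu : c = u
      · subst hcu
        obtain rfl := hw d hcd
        exact ⟨fun _ => ih.2 rfl, fun e => absurd e hcd.ne'⟩
      · refine ⟨fun hd => (ih.1 hcu).trans ((hadj _ _).2 ⟨hcd, hcu, hd⟩).reachable, ?_⟩
        rintro rfl
        rw [← hw c hcd.symm]
        exact ih.1 hcu
  exact key.1 hbu

/-- Attaching a new vertex to a tree gives a tree. -/
theorem TreeOn.attach (h : TreeOn T s) {u v : V} (hu : u ∈ s) (hv : v ∉ s) :
    TreeOn (T ⊔ SimpleGraph.edge u v) (insert v s) := by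
  have huv : u ≠ v := by rintro rfl; exact hv hu
  have hnuv : ¬ T.Reachable u v := by
    intro hr
    rw [SimpleGraph.reachable_iff_reflTransGen] at hr
    rcases Relation.ReflTransGen.cases_tail hr with e | ⟨c, _, hc⟩
    · exact huv e.symm
    · exact hv (h.mem hc.symm)
  have huv' : (T ⊔ SimpleGraph.edge u v).Adj u v := by
    rw [SimpleGraph.sup_adj, SimpleGraph.edge_adj]
    exact .inr ⟨.inl ⟨rfl, rfl⟩, huv⟩
  refine ⟨?_, ?_, h.acyclic.sup_edge_of_not_reachable hnuv⟩
  · intro x y hxy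
    rw [SimpleGraph.sup_adj, SimpleGraph.edge_adj] at hxy
    rcases hxy with hxy | ⟨⟨rfl, -⟩ | ⟨rfl, -⟩, -⟩
    · exact .inr (h.mem hxy)
    · exact .inr hu
    · exact .inl rfl
  · have key : ∀ x ∈ insert v s, (T ⊔ SimpleGraph.edge u v).Reachable x u := by
      rintro x (rfl | hx)
      · exact huv'.reachable.symm
      · exact (h.reach hx hu).mono le_sup_left
    exact fun a b ha hb => (key a ha).trans (key b hb).symm

end Surgery

section Subgraphs

variable {G T : SimpleGraph V} {s : Set V}

/-- The subgraph of `G` with vertex set `s` and the edges of `T`. -/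
def subgraphOf (hle : T ≤ G) (hm : ∀ ⦃a b⦄, T.Adj a b → a ∈ s) : G.Subgraph where
  verts := s
  Adj := T.Adj
  adj_sub h := hle h
  edge_vert h := hm h
  symm := T.symm

theorem subgraphOf_connected (hle : T ≤ G) (hm : ∀ ⦃a b⦄, T.Adj a b → a ∈ s)
    (hr : ∀ ⦃a b⦄, a ∈ s → b ∈ s → T.Reachable a b) (hs : s.Nonempty) :
    (subgraphOf hle hm).Connected := by
  refine ⟨@SimpleGraph.Connected.mk _ _ ?_ hs.to_subtype⟩
  rintro ⟨a, ha⟩ ⟨b, hb⟩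
  have := hr ha hb
  rw [SimpleGraph.reachable_iff_reflTransGen] at this
  induction this with
  | refl => rfl
  | @tail c d _ hcd ih =>
    exact (ih (hm hcd)).trans
      (SimpleGraph.Adj.reachable (G := (subgraphOf hle hm).coe) (show T.Adj c d from hcd))

theorem ncard_neighborSet_eq_one {v : V} :
    (T.neighborSet v).ncard = 1 ↔ v ∈ leaves T := by
  rw [Set.ncard_eq_one]
  constructor
  · rintro ⟨w, hw⟩
    have h : ∀ x, T.Adj v x ↔ x = w := fun x => by
      rw [← SimpleGraph.mem_neighborSet, hw, Set.mem_singleton_iff]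
    exact ⟨w, (h w).2 rfl, fun x hx => (h x).1 hx⟩
  · rintro ⟨w, hw, hw'⟩
    exact ⟨w, Set.eq_singleton_iff_unique_mem.2 ⟨hw, hw'⟩⟩

theorem treeOn_spanningCoe {H : G.Subgraph} (hH : H.coe.IsTree) :
    TreeOn H.spanningCoe H.verts := by
  have lift : ∀ (T' : SimpleGraph V) (K : SimpleGraph H.verts), T' ≤ H.spanningCoe →
      (∀ a b : H.verts, T'.Adj a b → K.Adj a b) → ∀ a b : V, T'.Reachable a b →
      ∀ (ha : a ∈ H.verts) (hb : b ∈ H.verts), K.Reachable ⟨a, ha⟩ ⟨b, hb⟩ := by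
    intro T' K hT hK a b hab ha hb
    rw [SimpleGraph.reachable_iff_reflTransGen] at hab
    induction hab with
    | refl => rfl
    | @tail c d _ hcd ih =>
      have hc : c ∈ H.verts := H.edge_vert (hT hcd)
      exact (ih hc).trans (SimpleGraph.Adj.reachable (hK ⟨c, hc⟩ ⟨d, hb⟩ hcd))
  refine ⟨fun a b hab => H.edge_vert hab, fun a b ha hb => ?_, ?_⟩
  · exact (hH.connected.preconnected ⟨a, ha⟩ ⟨b, hb⟩).map
      (⟨Subtype.val, fun {a b} hab => hab⟩ : H.coe →g H.spanningCoe)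
  · rw [SimpleGraph.isAcyclic_iff_forall_adj_isBridge]
    intro a b hab hr
    have ha : a ∈ H.verts := H.edge_vert hab
    have hb : b ∈ H.verts := H.edge_vert hab.symm
    have hab' : H.coe.Adj ⟨a, ha⟩ ⟨b, hb⟩ := hab
    refine SimpleGraph.isAcyclic_iff_forall_adj_isBridge.1 hH.isAcyclic hab' ?_
    refine lift _ _ (SimpleGraph.deleteEdges_le _) ?_ a b hr ha hb
    rintro ⟨c, hc⟩ ⟨d, hd⟩ hcd
    rw [SimpleGraph.deleteEdges_adj] at hcd ⊢
    refine ⟨hcd.1, fun e => hcd.2 ?_⟩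
    simp only [Set.mem_singleton_iff, Sym2.eq_iff, Subtype.mk.injEq] at e ⊢
    exact e

variable [Finite V]

theorem bddAbove_orders (G : SimpleGraph V) (k : ℕ) :
    BddAbove {n | ∃ H : G.Subgraph, IsKEndedTree G k H ∧ H.verts.ncard = n} := by
  refine ⟨Nat.card V, ?_⟩
  rintro _ ⟨H, _, rfl⟩
  exact Set.ncard_le_card _

theorem TreeOn.ncard_le (h : TreeOn T s) (hle : T ≤ G) (hs : s.Nonempty) {k : ℕ}
    (hk : (leaves T).ncard ≤ k) : s.ncard ≤ maxKEndedOrder G k := by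
  refine le_csSup (bddAbove_orders G k) ⟨subgraphOf hle h.mem, .inl ⟨?_, ?_⟩, rfl⟩
  · refine ⟨(subgraphOf_connected hle h.mem h.reach hs).coe, ?_⟩
    exact h.acyclic.comap (G := (subgraphOf hle h.mem).coe)
      ⟨Subtype.val, fun {a b} hab => (show T.Adj a b from hab)⟩ Subtype.val_injective
  · refine le_trans (Set.ncard_le_ncard ?_) hk
    rintro v ⟨_, hv⟩
    exact ncard_neighborSet_eq_one.1 hv

theorem ncard_le_of_cycle (hle : T ≤ G) (hm : ∀ ⦃a b⦄, T.Adj a b → a ∈ s)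
    (hr : ∀ ⦃a b⦄, a ∈ s → b ∈ s → T.Reachable a b) (hs : s.Nonempty) {k : ℕ} (hk : 1 ≤ k)
    (hc : s.ncard ≤ 2 ∨ ∀ v ∈ s, (T.neighborSet v).ncard = 2) :
    s.ncard ≤ maxKEndedOrder G k :=
  le_csSup (bddAbove_orders G k)
    ⟨subgraphOf hle hm, .inr ⟨hk, subgraphOf_connected hle hm hr hs, hc⟩, rfl⟩

theorem ncard_leaves_spanningCoe {H : G.Subgraph} :
    (leaves H.spanningCoe).ncard ≤ endVertexCount H := by
  refine Set.ncard_le_ncard fun v hv => ⟨?_, ?_⟩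
  · obtain ⟨w, hw, _⟩ := hv
    exact H.edge_vert hw
  · exact ncard_neighborSet_eq_one.2 hv

end Subgraphs

section Leaves

variable {T T' : SimpleGraph V} {v : V}

theorem notMem_leaves_of_two {a b : V} (ha : T.Adj v a) (hb : T.Adj v b) (hab : a ≠ b) :
    v ∉ leaves T := fun hv => hab (leaf_unique hv ha hb)

theorem exists_two_of_not_smallDeg (hv : ¬ SmallDeg T v) (b : V) :
    ∃ c d, T.Adj v c ∧ T.Adj v d ∧ c ≠ d ∧ c ≠ b ∧ d ≠ b := by
  unfold SmallDeg at hv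
  push Not at hv
  obtain ⟨x, y, z, hx, hy, hz, hxy, hxz, hyz⟩ := hv
  by_cases h1 : x = b
  · exact ⟨y, z, hy, hz, hyz, fun e => hxy (h1.trans e.symm), fun e => hxz (h1.trans e.symm)⟩
  · by_cases h2 : y = b
    · exact ⟨x, z, hx, hz, hxz, h1, fun e => hyz (h2.trans e.symm)⟩
    · exact ⟨x, y, hx, hy, hxy, h1, h2⟩

theorem mem_leaves_congr (h : ∀ y, T'.Adj v y ↔ T.Adj v y) : v ∈ leaves T' ↔ v ∈ leaves T := by
  simp [leaves, h]

theorem exists_ne_of_notMem_leaves {a : V} (hv : v ∉ leaves T) (ha : T.Adj v a) :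
    ∃ b, T.Adj v b ∧ b ≠ a := by
  by_contra! hcon
  exact hv ⟨a, ha, hcon⟩

end Leaves

/-- A tree in `G` with at most `k + 1` leaves, larger than every `k`-ended tree. -/
structure GoodTree (G : SimpleGraph V) (k : ℕ) (T : SimpleGraph V) (s : Set V) : Prop
    extends TreeOn T s where
  le : T ≤ G
  ncard_leaves : (leaves T).ncard ≤ k + 1
  large : maxKEndedOrder G k < s.ncard

namespace GoodTree

variable {G T : SimpleGraph V} {s : Set V} {k : ℕ}

theorem nonempty (h : GoodTree G k T s) : s.Nonempty := by
  rw [Set.nonempty_iff_ne_empty]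
  rintro rfl
  simpa using h.large

variable [Finite V]

theorem two_lt (h : GoodTree G k T s) (hk : 1 ≤ k) : 2 < s.ncard := by
  by_contra! hc
  exact absurd (ncard_le_of_cycle h.le h.mem h.reach h.nonempty hk (.inl hc)) h.large.not_ge

theorem lt_ncard_leaves (h : GoodTree G k T s) : k < (leaves T).ncard := by
  by_contra! hc
  exact absurd (h.ncard_le h.le h.nonempty hc) h.large.not_ge

theorem adj_leaf_notMem (h : GoodTree G k T s) (hk : 1 ≤ k) {u w : V} (hu : u ∈ leaves T)
    (huw : T.Adj u w) : w ∉ leaves T := by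
  intro hw
  have hsub : s ⊆ {u, w} := by
    refine h.closed_eq (h.mem huw) (Set.mem_insert _ _) ?_
    rintro x (rfl | rfl) y hxy
    · rw [leaf_unique hu hxy huw]; simp
    · rw [leaf_unique hw hxy huw.symm]; simp
  have h1 := Set.ncard_le_ncard hsub
  have h2 := Set.ncard_insert_le u {w}
  rw [Set.ncard_singleton] at h2
  have := h.two_lt hk
  omega

theorem delete_leaf (h : GoodTree G k T s) (hk : 1 ≤ k) {u w : V} (hu : u ∈ leaves T)
    (huw : T.Adj u w) (hlt : maxKEndedOrder G k + 1 < s.ncard) :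
    SmallDeg T w ∧ GoodTree G k (T.deleteIncidenceSet u) (s \ {u}) ∧
      w ∈ leaves (T.deleteIncidenceSet u) ∧
      ∀ v ∈ leaves T, v ≠ u → v ∈ leaves (T.deleteIncidenceSet u) := by
  have hadj : ∀ x y, (T.deleteIncidenceSet u).Adj x y ↔ T.Adj x y ∧ x ≠ u ∧ y ≠ u := by
    intro x y; rw [SimpleGraph.deleteIncidenceSet_adj]
  have htree := h.toTreeOn.delete_leaf hu
  have hle : T.deleteIncidenceSet u ≤ G := (SimpleGraph.deleteIncidenceSet_le _ _).trans h.le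
  have hcard : (s \ {u}).ncard + 1 = s.ncard :=
    Set.ncard_sdiff_singleton_add_one (h.mem huw)
  have hcardL : (leaves T \ {u}).ncard + 1 = (leaves T).ncard :=
    Set.ncard_sdiff_singleton_add_one hu
  have hL := h.ncard_leaves
  have hnb : ∀ x, x ≠ u → x ≠ w → ∀ y, (T.deleteIncidenceSet u).Adj x y ↔ T.Adj x y := by
    intro x hxu hxw y
    rw [hadj]
    refine ⟨fun h => h.1, fun hxy => ⟨hxy, hxu, ?_⟩⟩
    rintro rfl
    exact hxw (leaf_unique hu hxy.symm huw)
  have hsub : leaves (T.deleteIncidenceSet u) ⊆ insert w (leaves T \ {u}) := by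
    intro v hv
    by_cases hvw : v = w
    · exact .inl hvw
    · have hvu : v ≠ u := by
        rintro rfl
        obtain ⟨z, hz, _⟩ := hv
        exact ((hadj _ _).1 hz).2.1 rfl
      exact .inr ⟨(mem_leaves_congr (hnb v hvu hvw)).1 hv, hvu⟩
  have hsmall : SmallDeg T w := by
    by_contra hns
    obtain ⟨c, d, hc, hd, hcd, hcu, hdu⟩ := exists_two_of_not_smallDeg hns u
    have hw : w ∉ leaves (T.deleteIncidenceSet u) :=
      notMem_leaves_of_two ((hadj _ _).2 ⟨hc, huw.ne', hcu⟩) ((hadj _ _).2 ⟨hd, huw.ne', hdu⟩) hcd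
    have hsub' : leaves (T.deleteIncidenceSet u) ⊆ leaves T \ {u} := by
      intro v hv
      rcases hsub hv with rfl | hv'
      · exact absurd hv hw
      · exact hv'
    have h1 := Set.ncard_le_ncard hsub'
    have h2 := htree.ncard_le hle (Set.nonempty_of_ncard_ne_zero (by omega))
      (show _ ≤ k by omega)
    omega
  refine ⟨hsmall, ⟨htree, hle, ?_, by omega⟩, ?_, ?_⟩
  · have h1 := Set.ncard_le_ncard hsub
    have h2 := Set.ncard_insert_le w (leaves T \ {u})
    omega
  · obtain ⟨z, hz, hzu⟩ := exists_ne_of_notMem_leaves (h.adj_leaf_notMem hk hu huw) huw.symm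
    refine ⟨z, (hadj _ _).2 ⟨hz, huw.ne', hzu⟩, fun y hy => ?_⟩
    obtain ⟨hy1, -, hy2⟩ := (hadj _ _).1 hy
    rcases hsmall huw.symm hy1 hz with e | e | e
    · exact absurd e.symm hy2
    · exact absurd e.symm hzu
    · exact e
  · intro v hv hvu
    refine (mem_leaves_congr (hnb v hvu ?_)).2 hv
    rintro rfl
    exact h.adj_leaf_notMem hk hu huw hv

theorem smallDeg_of_between (h : GoodTree G k T s) {u v a b : V} (hu : u ∈ leaves T)
    (hv : v ∈ leaves T) (hG : G.Adj u v) (hT : ¬ T.Adj u v) (hab : T.Adj a b)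
    (hva : toward T v a = b) (hub : toward T u b = a) : SmallDeg T a := by
  by_contra hns
  have hus := leaves_subset h.toTreeOn hu
  have hvs := leaves_subset h.toTreeOn hv
  have h1 := h.reachable_deleteEdges hvs hab hva
  have h2 := h.reachable_deleteEdges hus hab.symm hub
  rw [Sym2.eq_swap] at h2
  have htree := h.exchange hus hvs hab h2 h1
  set T' := T.deleteEdges {s(a, b)} ⊔ SimpleGraph.edge u v with hT'
  have hadj : ∀ x y, T'.Adj x y ↔ (T.Adj x y ∧ ¬ (x = a ∧ y = b ∨ x = b ∧ y = a)) ∨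
      ((x = u ∧ y = v ∨ x = v ∧ y = u) ∧ x ≠ y) := by
    intro x y
    rw [hT', SimpleGraph.sup_adj, SimpleGraph.deleteEdges_adj, SimpleGraph.edge_adj,
      Set.mem_singleton_iff, Sym2.eq_iff]
  have hle : T' ≤ G := by
    intro x y hxy
    rcases (hadj x y).1 hxy with hxy | ⟨⟨rfl, rfl⟩ | ⟨rfl, rfl⟩, -⟩
    · exact h.le hxy.1
    · exact hG
    · exact hG.symm
  have hend : ∀ x y, x ∈ leaves T → x ≠ b → ¬ T.Adj x y → T'.Adj x y → x ∉ leaves T' := by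
    intro x y hx hxb hxy hxy'
    obtain ⟨z, hz, _⟩ := id hx
    have hxa : x ≠ a := by rintro rfl; exact hns (smallDeg_of_leaf hx)
    refine notMem_leaves_of_two ((hadj x z).2 (.inl ⟨hz, by tauto⟩)) hxy' ?_
    rintro rfl
    exact hxy hz
  have hsub : leaves T' ⊆ insert b ((leaves T \ {u}) \ {v}) := by
    intro x hx
    by_cases hxb : x = b
    · exact .inl hxb
    have hxu : x ≠ u := by
      rintro rfl
      exact hend x v hu hxb hT ((hadj _ _).2 (.inr ⟨.inl ⟨rfl, rfl⟩, hG.ne⟩)) hx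
    have hxv : x ≠ v := by
      rintro rfl
      exact hend x u hv hxb (fun e => hT e.symm)
        ((hadj _ _).2 (.inr ⟨.inr ⟨rfl, rfl⟩, hG.ne'⟩)) hx
    have hxa : x ≠ a := by
      rintro rfl
      obtain ⟨c, d, hc, hd, hcd, hcb, hdb⟩ := exists_two_of_not_smallDeg hns b
      exact notMem_leaves_of_two ((hadj _ _).2 (.inl ⟨hc, by tauto⟩))
        ((hadj _ _).2 (.inl ⟨hd, by tauto⟩)) hcd hx
    refine .inr ⟨⟨(mem_leaves_congr fun y => ?_).1 hx, hxu⟩, hxv⟩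
    rw [hadj]
    tauto
  have c1 := Set.ncard_le_ncard hsub
  have c2 := Set.ncard_insert_le b ((leaves T \ {u}) \ {v})
  have c3 := Set.ncard_sdiff_singleton_add_one hu
  have c4 := Set.ncard_sdiff_singleton_add_one (s := leaves T \ {u}) (a := v) ⟨hv, hG.ne'⟩
  have c5 := h.ncard_leaves
  exact absurd (htree.ncard_le hle h.nonempty (show _ ≤ k by omega)) h.large.not_ge

theorem leaves_indep (h : GoodTree G k T s) (hk : 1 ≤ k) {u v : V} (hu : u ∈ leaves T)
    (hv : v ∈ leaves T) : ¬ G.Adj u v := by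
  intro hG
  have hT : ¬ T.Adj u v := fun e => h.adj_leaf_notMem hk hu e hv
  have hus := leaves_subset h.toTreeOn hu
  have hvs := leaves_subset h.toTreeOn hv
  have hP : s ⊆ {w | w ∈ s ∧ (w ≠ v → toward T u (toward T v w) = w)} := by
    refine h.closed_eq hus ⟨hus, fun _ => ?_⟩ ?_
    · have h1 := (h.toward_spec hvs hus hG.ne).1
      refine (h.toward_or hus h1).resolve_left fun e => ?_
      rw [toward_self] at e
      exact h1.ne e
    · rintro w ⟨hw, hwP⟩ y hwy
      refine ⟨h.mem hwy.symm, fun hyv => ?_⟩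
      rcases h.toward_or hvs hwy with e | e
      · by_cases hwv : w = v
        · subst hwv; rw [toward_self] at e; exact absurd e hwy.ne
        have h1 := (h.toward_spec hvs (h.mem hwy.symm) hyv).1
        refine (h.toward_or hus h1).resolve_left fun e' => ?_
        have h2 := hwP hwv
        rw [e, e'] at h2
        exact h.not_toward hvs hwy e h2
      · rw [e]
        rcases h.toward_or hus hwy with e' | e'
        · exact e'
        · exfalso
          have hwu : w ≠ u := by
            rintro rfl
            by_cases hwv : w = v
            · exact hG.ne hwv
            have h3 := leaf_unique hu (h.toward_spec hvs hw hwv).1 hwy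
            exact h.not_toward hvs hwy h3 e
          have hyu : y ≠ u := by
            rintro rfl
            rw [toward_self] at e'
            exact hwy.ne' e'
          by_cases hwv : w = v
          · subst hwv
            have := leaf_unique hv (h.toward_spec hus hw hwu).1 hwy
            exact h.not_toward hus hwy this e'
          have a1 := (h.toward_spec hvs hw hwv).1
          have a2 := (h.toward_spec hus hw hwu).1
          have hs := h.smallDeg_of_between hu hv hG hT a1 rfl (hwP hwv)
          rcases hs a1 a2 hwy with e2 | e2 | e2
          · have := hwP hwv
            rw [e2] at this
            exact h.not_toward hus a2 rfl this
          · exact h.not_toward hvs hwy e2 e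
          · exact h.not_toward hus hwy e2 e'
  have hadj : ∀ x y, (T ⊔ SimpleGraph.edge u v).Adj x y ↔ T.Adj x y ∨
      ((x = u ∧ y = v ∨ x = v ∧ y = u) ∧ x ≠ y) := by
    intro x y
    rw [SimpleGraph.sup_adj, SimpleGraph.edge_adj]
  refine absurd (ncard_le_of_cycle (T := T ⊔ SimpleGraph.edge u v) (G := G) (s := s) ?_ ?_ ?_
    h.nonempty hk (.inr ?_)) h.large.not_ge
  · intro x y hxy
    rcases (hadj x y).1 hxy with hxy | ⟨⟨rfl, rfl⟩ | ⟨rfl, rfl⟩, -⟩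
    · exact h.le hxy
    · exact hG
    · exact hG.symm
  · intro x y hxy
    rcases (hadj x y).1 hxy with hxy | ⟨⟨rfl, rfl⟩ | ⟨rfl, rfl⟩, -⟩
    · exact h.mem hxy
    · exact hus
    · exact hvs
  · exact fun a b ha hb => (h.reach ha hb).mono le_sup_left
  · intro w hw
    have hleaf : ∀ x y, x ∈ leaves T → ¬ T.Adj x y → (∀ z, (T ⊔ SimpleGraph.edge u v).Adj x z ↔
        T.Adj x z ∨ z = y) → ((T ⊔ SimpleGraph.edge u v).neighborSet x).ncard = 2 := by
      rintro x y ⟨z, hz, hz'⟩ hxy hx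
      have : (T ⊔ SimpleGraph.edge u v).neighborSet x = {z, y} := by
        ext t
        rw [SimpleGraph.mem_neighborSet, hx]
        constructor
        · rintro (ht | ht)
          · exact .inl (hz' t ht)
          · exact .inr ht
        · rintro (rfl | rfl)
          · exact .inl hz
          · exact .inr rfl
      rw [this, Set.ncard_pair]
      rintro rfl
      exact hxy hz
    have hne := hG.ne
    by_cases hwu : w = u
    · subst hwu
      refine hleaf w v hu hT fun z => ?_
      rw [hadj]
      constructor
      · tauto
      · rintro (hz | rfl) <;> tauto
    by_cases hwv : w = v
    · subst hwv
      refine hleaf w u hv (fun e => hT e.symm) fun z => ?_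
      rw [hadj]
      constructor
      · tauto
      · rintro (hz | rfl) <;> tauto
    have a1 := (h.toward_spec hvs hw hwv).1
    have a2 := (h.toward_spec hus hw hwu).1
    have hs := h.smallDeg_of_between hu hv hG hT a1 rfl ((hP hw).2 hwv)
    have hne : toward T v w ≠ toward T u w := by
      intro e
      have := (hP hw).2 hwv
      rw [e] at this
      exact h.not_toward hus a2 rfl this
    have : (T ⊔ SimpleGraph.edge u v).neighborSet w = {toward T v w, toward T u w} := by
      ext t
      rw [SimpleGraph.mem_neighborSet, hadj]
      constructor
      · rintro (ht | ht)
        · rcases hs a1 a2 ht with e | e | e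
          · exact absurd e hne
          · exact .inl e.symm
          · exact .inr e.symm
        · tauto
      · rintro (rfl | rfl)
        · exact .inl a1
        · exact .inl a2
    rw [this, Set.ncard_pair hne]

theorem rotate (h : GoodTree G k T s) (hk : 1 ≤ k) {u x y : V} (hu : u ∈ leaves T) (hx : x ∈ s)
    (hG : G.Adj u x) (hT : ¬ T.Adj u x) (hy : toward T u x = y) :
    SmallDeg T y ∧ GoodTree G k (T.deleteEdges {s(x, y)} ⊔ SimpleGraph.edge x u) s ∧
      y ∈ leaves (T.deleteEdges {s(x, y)} ⊔ SimpleGraph.edge x u) ∧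
      ∀ v ∈ leaves T, v ≠ u → v ≠ y ∧
        v ∈ leaves (T.deleteEdges {s(x, y)} ⊔ SimpleGraph.edge x u) := by
  have hus := leaves_subset h.toTreeOn hu
  have hxy : T.Adj x y := by rw [← hy]; exact (h.toward_spec hus hx hG.ne').1
  have hyu : y ≠ u := by rintro rfl; exact hT hxy.symm
  have htree := h.exchange hx hus hxy .rfl (h.reachable_deleteEdges hus hxy hy)
  set T' := T.deleteEdges {s(x, y)} ⊔ SimpleGraph.edge x u with hT'
  have hadj : ∀ a b, T'.Adj a b ↔ (T.Adj a b ∧ ¬ (a = x ∧ b = y ∨ a = y ∧ b = x)) ∨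
      ((a = x ∧ b = u ∨ a = u ∧ b = x) ∧ a ≠ b) := by
    intro a b
    rw [hT', SimpleGraph.sup_adj, SimpleGraph.deleteEdges_adj, SimpleGraph.edge_adj,
      Set.mem_singleton_iff, Sym2.eq_iff]
  have hle : T' ≤ G := by
    intro a b hab
    rcases (hadj a b).1 hab with hab | ⟨⟨rfl, rfl⟩ | ⟨rfl, rfl⟩, -⟩
    · exact h.le hab.1
    · exact hG.symm
    · exact hG
  have hyz := (h.toward_spec hus (h.mem hxy.symm) hyu).1
  have hzx : toward T u y ≠ x := h.not_toward hus hxy hy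
  have hux := hG.ne
  have hyx := hxy.ne'
  have hcongr : ∀ a, a ≠ x → a ≠ y → a ≠ u → ∀ b, T'.Adj a b ↔ T.Adj a b := by
    intro a h1 h2 h3 b
    rw [hadj]
    tauto
  have hsub : leaves T' ⊆ insert y (leaves T \ {u}) := by
    intro a ha
    by_cases hay : a = y
    · exact .inl hay
    have hau : a ≠ u := by
      rintro rfl
      obtain ⟨z, hz, _⟩ := id hu
      refine notMem_leaves_of_two ((hadj a z).2 (.inl ⟨hz, by tauto⟩))
        ((hadj a x).2 (.inr ⟨.inr ⟨rfl, rfl⟩, hux⟩)) ?_ ha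
      rintro rfl
      exact hT hz
    by_cases hax : a = x
    · subst hax
      refine .inr ⟨⟨y, hxy, fun b hb => ?_⟩, hau⟩
      by_contra hby
      refine notMem_leaves_of_two ((hadj a b).2 (.inl ⟨hb, by tauto⟩))
        ((hadj a u).2 (.inr ⟨.inl ⟨rfl, rfl⟩, hau⟩)) ?_ ha
      rintro rfl
      exact hT hb.symm
    · exact .inr ⟨(mem_leaves_congr (hcongr a hax hay hau)).1 ha, hau⟩
  have c1 := Set.ncard_sdiff_singleton_add_one hu
  have c2 := h.ncard_leaves
  have hsmall : SmallDeg T y := by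
    by_contra hns
    obtain ⟨c, d, hc, hd, hcd, hcx, hdx⟩ := exists_two_of_not_smallDeg hns x
    have hynl : y ∉ leaves T' := notMem_leaves_of_two ((hadj _ _).2 (.inl ⟨hc, by tauto⟩))
      ((hadj _ _).2 (.inl ⟨hd, by tauto⟩)) hcd
    have hsub' : leaves T' ⊆ leaves T \ {u} := by
      intro a ha
      rcases hsub ha with rfl | ha'
      · exact absurd ha hynl
      · exact ha'
    have c3 := Set.ncard_le_ncard hsub'
    exact absurd (htree.ncard_le hle h.nonempty (show _ ≤ k by omega)) h.large.not_ge
  refine ⟨hsmall, ⟨htree, hle, ?_, h.large⟩, ?_, ?_⟩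
  · have c3 := Set.ncard_le_ncard hsub
    have c4 := Set.ncard_insert_le y (leaves T \ {u})
    omega
  · refine ⟨toward T u y, (hadj _ _).2 (.inl ⟨hyz, by tauto⟩), fun b hb => ?_⟩
    have hb' : T.Adj y b ∧ b ≠ x := by
      rcases (hadj _ _).1 hb with hb | hb <;> tauto
    rcases hsmall hyz hb'.1 hxy.symm with e | e | e
    · exact e.symm
    · exact absurd e hzx
    · exact absurd e hb'.2
  · intro v hv hvu
    have hvx : v ≠ x := by
      rintro rfl
      exact h.leaves_indep hk hu hv hG
    have hvy : v ≠ y := by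
      rintro rfl
      exact notMem_leaves_of_two hyz hxy.symm hzx hv
    exact ⟨hvy, (mem_leaves_congr (hcongr v hvx hvy hvu)).2 hv⟩

/-- Vertices close to a leaf along a path have degree at most two, are not leaves, and are not
adjacent in `G` to the other leaves. -/
theorem path_from_leaf (hk : 1 ≤ k) (t : ℕ) : ∀ (T : SimpleGraph V) (s : Set V) (p : ℕ → V),
    GoodTree G k T s → maxKEndedOrder G k + t < s.ncard → p 0 ∈ leaves T →
    (∀ i < t, T.Adj (p i) (p (i + 1))) → (∀ i ≤ t, ∀ j ≤ t, p i = p j → i = j) →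
    SmallDeg T (p t) ∧ (1 ≤ t → p t ∉ leaves T) ∧ ∀ w ∈ leaves T, w ≠ p 0 → ¬ G.Adj w (p t) := by
  induction t with
  | zero =>
    intro T s p h _ h0 _ _
    exact ⟨smallDeg_of_leaf h0, by simp, fun w hw _ => h.leaves_indep hk hw h0⟩
  | succ t ih =>
    intro T s p h hlt h0 hadj hinj
    have h01 := hadj 0 (by omega)
    rw [zero_add] at h01
    obtain ⟨hs1, hgood, hl1, hl⟩ := h.delete_leaf hk h0 h01 (by omega)
    have h1nl := h.adj_leaf_notMem hk h0 h01
    have hcard : (s \ {p 0}).ncard + 1 = s.ncard :=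
      Set.ncard_sdiff_singleton_add_one (h.mem h01)
    have hne : ∀ i ≤ t, p (i + 1) ≠ p 0 := fun i hi e => by
      have := hinj (i + 1) (by omega) 0 (by omega) e
      omega
    obtain ⟨i1, i2, i3⟩ := ih _ _ (fun i => p (i + 1)) hgood (by omega) hl1
      (fun i hi => by
        rw [SimpleGraph.deleteIncidenceSet_adj]
        exact ⟨hadj (i + 1) (by omega), hne i (by omega), hne (i + 1) (by omega)⟩)
      (fun i hi j hj e => by
        have := hinj (i + 1) (by omega) (j + 1) (by omega) e
        omega)
    refine ⟨?_, fun _ hmem => ?_, fun w hw hw0 => ?_⟩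
    · rcases Nat.eq_zero_or_pos t with rfl | ht
      · exact hs1
      have hlift : ∀ y, T.Adj (p (t + 1)) y → (T.deleteIncidenceSet (p 0)).Adj (p (t + 1)) y := by
        intro y hy
        rw [SimpleGraph.deleteIncidenceSet_adj]
        refine ⟨hy, hne t le_rfl, ?_⟩
        rintro rfl
        have := hinj (t + 1) le_rfl 1 (by omega) (leaf_unique h0 hy.symm h01)
        omega
      exact fun a b c ha hb hc => i1 (hlift a ha) (hlift b hb) (hlift c hc)
    · rcases Nat.eq_zero_or_pos t with rfl | ht
      · exact h1nl hmem
      · exact i2 ht (hl _ hmem (hne t le_rfl))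
    · refine i3 w (hl w hw hw0) ?_
      rintro rfl
      exact h1nl hw

end GoodTree

section Iterate

variable {T : SimpleGraph V} {s : Set V}

theorem TreeOn.iterate_mem (h : TreeOn T s) {u x : V} (hu : u ∈ s) (hx : x ∈ s) (n : ℕ) :
    (toward T u)^[n] x ∈ s := by
  induction n with
  | zero => exact hx
  | succ n ih => rw [Function.iterate_succ_apply']; exact h.toward_mem hu ih

theorem TreeOn.iterate_adj (h : TreeOn T s) {u x : V} (hu : u ∈ s) (hx : x ∈ s) {n : ℕ}
    (hn : (toward T u)^[n] x ≠ u) : T.Adj ((toward T u)^[n] x) ((toward T u)^[n + 1] x) := by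
  rw [Function.iterate_succ_apply']
  exact (h.toward_spec hu (h.iterate_mem hu hx n) hn).1

theorem TreeOn.iterate_dist (h : TreeOn T s) {u x : V} (hu : u ∈ s) (hx : x ∈ s) {n : ℕ}
    (hn : ∀ i < n, (toward T u)^[i] x ≠ u) :
    T.dist u ((toward T u)^[n] x) + n = T.dist u x := by
  induction n with
  | zero => rfl
  | succ n ih =>
    have h1 := ih fun i hi => hn i (by omega)
    have h2 := (h.toward_spec hu (h.iterate_mem hu hx n) (hn n (by omega))).2
    rw [Function.iterate_succ_apply']
    omega

theorem iterate_ne_of_le {u x : V} {m n : ℕ} (hmn : m ≤ n) (hn : (toward T u)^[n] x ≠ u) :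
    (toward T u)^[m] x ≠ u := by
  intro e
  refine hn ?_
  obtain ⟨d, rfl⟩ := Nat.exists_eq_add_of_le' hmn
  rw [Function.iterate_add_apply, e, Function.iterate_fixed (toward_self T u)]

end Iterate

namespace GoodTree

variable [Finite V] {G T : SimpleGraph V} {s : Set V} {k l : ℕ}

theorem tail (h : GoodTree G k T s) (hk : 1 ≤ k) (hl : maxKEndedOrder G k + l ≤ s.ncard)
    {j r : V} (hj : j ∈ leaves T) (hr : r ∈ leaves T) (hjr : j ≠ r) {t : ℕ} (ht : t < l) :
    SmallDeg T ((toward T r)^[t] j) ∧ (1 ≤ t → (toward T r)^[t] j ∉ leaves T) ∧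
      ∀ w ∈ leaves T, w ≠ j → ¬ G.Adj w ((toward T r)^[t] j) := by
  have hjs := leaves_subset h.toTreeOn hj
  have hrs := leaves_subset h.toTreeOn hr
  have step : ∀ t < l, (∀ i < t, (toward T r)^[i] j ≠ r) →
      SmallDeg T ((toward T r)^[t] j) ∧ (1 ≤ t → (toward T r)^[t] j ∉ leaves T) ∧
      ∀ w ∈ leaves T, w ≠ j → ¬ G.Adj w ((toward T r)^[t] j) := by
    intro t ht hne
    refine path_from_leaf hk t T s (fun i => (toward T r)^[i] j) h (by omega) hj
      (fun i hi => h.iterate_adj hrs hjs (hne i hi)) fun a ha b hb e => ?_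
    have h1 := h.iterate_dist hrs hjs (n := a) fun i hi => hne i (by omega)
    have h2 := h.iterate_dist hrs hjs (n := b) fun i hi => hne i (by omega)
    rw [e] at h1
    omega
  have hne : ∀ t < l, (toward T r)^[t] j ≠ r := by
    intro t
    induction t using Nat.strong_induction_on with
    | _ t ih =>
      intro ht
      rcases Nat.eq_zero_or_pos t with rfl | h0
      · exact hjr
      · intro e
        refine (step t ht fun i hi => ih i hi (by omega)).2.1 h0 ?_
        rw [e]
        exact hr
  exact step t ht fun i hi => hne i (by omega)

theorem gap (h : GoodTree G k T s) (hk : 1 ≤ k) (hl : maxKEndedOrder G k + l ≤ s.ncard)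
    {u x : V} (hu : u ∈ leaves T) (hx : x ∈ s) (hG : G.Adj u x) {t : ℕ} (ht1 : 1 ≤ t)
    (ht : t ≤ l) : SmallDeg T ((toward T u)^[t] x) ∧
      ∀ w ∈ leaves T, w ≠ u → ¬ G.Adj w ((toward T u)^[t] x) := by
  have hus := leaves_subset h.toTreeOn hu
  by_cases hend : (toward T u)^[t] x = u
  · rw [hend]
    exact ⟨smallDeg_of_leaf hu, fun w hw _ => h.leaves_indep hk hw hu⟩
  have hT : ¬ T.Adj u x := by
    intro e
    have : toward T u x = u := (h.toward_or hus e.symm).resolve_right fun e' => by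
      rw [toward_self] at e'
      exact hG.ne e'
    exact iterate_ne_of_le ht1 hend this
  obtain ⟨r1, r2, r3, r4⟩ := h.rotate hk hu hx hG hT rfl
  set y := toward T u x with hy
  obtain ⟨t, rfl⟩ := Nat.exists_eq_add_of_le' ht1
  have hdist : ∀ i ≤ t + 1, T.dist u ((toward T u)^[i] x) + i = T.dist u x := fun i hi =>
    h.iterate_dist hus hx fun j hj => iterate_ne_of_le (by omega) hend
  have hnx : ∀ i, 1 ≤ i → i ≤ t + 1 → (toward T u)^[i] x ≠ x := by
    intro i hi hi' e
    have := hdist i hi'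
    rw [e] at this
    omega
  have lift : ∀ a b, T.Adj a b → a ≠ x → b ≠ x →
      (T.deleteEdges {s(x, y)} ⊔ SimpleGraph.edge x u).Adj a b := by
    intro a b hab ha hb
    rw [SimpleGraph.sup_adj, SimpleGraph.deleteEdges_adj, Set.mem_singleton_iff, Sym2.eq_iff]
    exact .inl ⟨hab, by tauto⟩
  obtain ⟨p1, -, p3⟩ := path_from_leaf hk t _ s (fun i => (toward T u)^[i + 1] x) r2 (by omega) r3
    (fun i hi => lift _ _ (h.iterate_adj hus hx (iterate_ne_of_le (by omega) hend))
      (hnx _ (by omega) (by omega)) (hnx _ (by omega) (by omega)))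
    (fun a ha b hb e => by
      have h1 := hdist (a + 1) (by omega)
      have h2 := hdist (b + 1) (by omega)
      rw [e] at h1
      omega)
  refine ⟨?_, fun w hw hwu => p3 w (r4 w hw hwu).2 (r4 w hw hwu).1⟩
  rcases Nat.eq_zero_or_pos t with rfl | ht0
  · exact r1
  have hlift : ∀ z, T.Adj ((toward T u)^[t + 1] x) z →
      (T.deleteEdges {s(x, y)} ⊔ SimpleGraph.edge x u).Adj ((toward T u)^[t + 1] x) z := by
    intro z hz
    have h1 := hnx (t + 1) (by omega) le_rfl
    have h2 : (toward T u)^[t + 1] x ≠ y := by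
      intro e
      have h3 := hdist (t + 1) le_rfl
      have h4 := hdist 1 (by omega)
      rw [e, hy] at h3
      rw [Function.iterate_one] at h4
      omega
    rw [SimpleGraph.sup_adj, SimpleGraph.deleteEdges_adj, Set.mem_singleton_iff, Sym2.eq_iff]
    exact .inl ⟨hz, by tauto⟩
  exact fun a b c ha hb hc => p1 (hlift a ha) (hlift b hb) (hlift c hc)

end GoodTree

/-- A path through a vertex `b` of degree at most two continues to the other neighbour of `b`. -/
theorem TreeOn.toward_pass {T : SimpleGraph V} {s : Set V} (h : TreeOn T s) {w a b c : V}
    (hw : w ∈ s) (hab : T.Adj a b) (hbc : T.Adj b c) (hac : a ≠ c) (hd : SmallDeg T b)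
    (hbw : b ≠ w) (he : toward T w a = b) : toward T w b = c := by
  rcases hd hab.symm hbc (h.toward_spec hw (h.mem hbc) hbw).1 with e | e | e
  · exact absurd e hac
  · exact absurd e.symm (h.not_toward hw hab he)
  · exact e.symm

theorem TreeOn.toward_ne_of_toward_eq {T : SimpleGraph V} {s : Set V} (h : TreeOn T s) {u w a : V}
    (hu : u ∈ leaves T) (hw : w ∈ s) (huw : u ≠ w) (ha : a ∈ s) (hau : a ≠ u)
    (he : toward T u a = toward T w a) : toward T u a ≠ u := by
  intro e
  have hus := leaves_subset h hu
  have hadj := (h.toward_spec hus ha hau).1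
  rw [e] at hadj
  exact h.not_toward hw hadj (he.symm.trans e)
    (leaf_unique hu (h.toward_spec hw hus huw).1 hadj.symm)

/-- An arbitrary numbering of the elements of a finite set. -/
noncomputable def rank (A : Finset V) (a : V) : ℕ :=
  open Classical in if h : a ∈ A then A.equivFin ⟨a, h⟩ else 0

theorem rank_lt {A : Finset V} {a : V} (ha : a ∈ A) : rank A a < A.card := by
  rw [rank, dif_pos ha]
  exact (A.equivFin ⟨a, ha⟩).2

theorem rank_inj {A : Finset V} {a b : V} (ha : a ∈ A) (hb : b ∈ A) (e : rank A a = rank A b) :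
    a = b := by
  rw [rank, rank, dif_pos ha, dif_pos hb] at e
  simpa using A.equivFin.injective (Fin.ext e)

/-- The vertices of `S` adjacent to `x` in `G` that lie behind `c` as seen from `x` in `T`. -/
noncomputable def group (G T : SimpleGraph V) (S : Finset V) (x c : V) : Finset V :=
  open Classical in {w ∈ S | G.Adj w x ∧ toward T w x = c}

theorem mem_group {G T : SimpleGraph V} {S : Finset V} {x c w : V} :
    w ∈ group G T S x c ↔ w ∈ S ∧ G.Adj w x ∧ toward T w x = c := by
  simp [group]

/-- How far the neighbour `x` of `u` is shifted towards `u`. -/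
noncomputable def offset (G T : SimpleGraph V) (S : Finset V) (r x u : V) : ℕ :=
  open Classical in
  rank (group G T S x (toward T u x)) u + if toward T u x = toward T r x then 0 else 1

/-- The local structure around the leaves of a tree `T` that is exploited by the degree count. -/
structure Spread (G T : SimpleGraph V) (s : Set V) (l : ℕ) (S : Finset V) (r : V) : Prop
    extends TreeOn T s where
  nbr : ∀ ⦃u x⦄, u ∈ leaves T → G.Adj u x → x ∈ s
  indep : ∀ ⦃u v⦄, u ∈ leaves T → v ∈ leaves T → ¬ G.Adj u v
  gap : ∀ ⦃u x t⦄, u ∈ leaves T → G.Adj u x → 1 ≤ t → t ≤ l → SmallDeg T ((toward T u)^[t] x) ∧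
    ∀ w ∈ leaves T, w ≠ u → ¬ G.Adj w ((toward T u)^[t] x)
  tail : ∀ ⦃j t⦄, j ∈ leaves T → j ≠ r → t < l → SmallDeg T ((toward T r)^[t] j) ∧
    (1 ≤ t → (toward T r)^[t] j ∉ leaves T) ∧
    ∀ w ∈ leaves T, w ≠ j → ¬ G.Adj w ((toward T r)^[t] j)
  subset : ∀ ⦃u⦄, u ∈ S → u ∈ leaves T
  root : r ∈ S
  card_le : S.card ≤ l + 1

namespace Spread

variable {G T : SimpleGraph V} {s : Set V} {l : ℕ} {S : Finset V} {r u x u' x' j : V}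

theorem mem_s (h : Spread G T s l S r) (hu : u ∈ S) : u ∈ s :=
  leaves_subset h.toTreeOn (h.subset hu)

theorem shared (h : Spread G T s l S r) {w : V} (hu : u ∈ leaves T) (hw : w ∈ leaves T)
    (huw : u ≠ w) (hG : G.Adj u x) (he : toward T u x = toward T w x) {t : ℕ} (ht : t ≤ l + 1) :
    (toward T u)^[t] x = (toward T w)^[t] x ∧ (toward T u)^[t] x ≠ u ∧
      (toward T u)^[t] x ≠ w := by
  have hus := leaves_subset h.toTreeOn hu
  have hws := leaves_subset h.toTreeOn hw
  have hx := h.nbr hu hG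
  have hxw : x ≠ w := by rintro rfl; exact h.indep hu hw hG
  have meet : ∀ a ∈ s, a ≠ u → a ≠ w → toward T u a = toward T w a →
      toward T u a ≠ u ∧ toward T u a ≠ w := fun a ha hau haw e =>
    ⟨h.toward_ne_of_toward_eq hu hws huw ha hau e,
      e ▸ h.toward_ne_of_toward_eq hw hus huw.symm ha haw e.symm⟩
  have key : ∀ t ≤ l, toward T u ((toward T u)^[t] x) = toward T w ((toward T u)^[t] x) ∧
      (toward T u)^[t] x ≠ u ∧ (toward T u)^[t] x ≠ w := by
    intro t
    induction t with
    | zero => exact fun _ => ⟨he, hG.ne', hxw⟩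
    | succ t ih =>
      intro ht
      obtain ⟨e, n1, n2⟩ := ih (by omega)
      obtain ⟨n3, n4⟩ := meet _ (h.iterate_mem hus hx t) n1 n2 e
      rw [← Function.iterate_succ_apply' (toward T u)] at n3 n4 e
      have hadj := h.iterate_adj hus hx n1
      have hadj' := h.iterate_adj hus hx n3
      have hback := h.not_toward hus hadj (Function.iterate_succ_apply' ..).symm
      rw [Function.iterate_succ_apply' _ (t + 1)] at hadj'
      exact ⟨(h.toward_pass hws hadj hadj' hback.symm
        (h.gap hu hG (by omega) (by omega)).1 n4 e.symm).symm, n3, n4⟩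
  induction t with
  | zero => exact ⟨rfl, hG.ne', hxw⟩
  | succ t ih =>
    obtain ⟨e, n1, n2⟩ := ih (by omega)
    have e' := (key t (by omega)).1
    rw [Function.iterate_succ_apply', Function.iterate_succ_apply', ← e]
    exact ⟨e', meet _ (h.iterate_mem hus hx t) n1 n2 e'⟩

theorem offset_le (h : Spread G T s l S r) (hu : u ∈ S) (hG : G.Adj u x) :
    offset G T S r x u ≤ l := by
  classical
  have h1 := rank_lt (mem_group.2 ⟨hu, hG, rfl⟩ : u ∈ group G T S x (toward T u x))
  have h2 := h.card_le
  unfold offset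
  split_ifs with e
  · have : (group G T S x (toward T u x)).card ≤ S.card :=
      Finset.card_le_card fun w hw => (mem_group.1 hw).1
    omega
  · have : (group G T S x (toward T u x)).card ≤ (S.erase r).card := by
      refine Finset.card_le_card fun w hw => ?_
      obtain ⟨w1, -, w2⟩ := mem_group.1 hw
      refine Finset.mem_erase.2 ⟨?_, w1⟩
      rintro rfl
      exact e w2.symm
    rw [Finset.card_erase_of_mem h.root] at this
    omega

theorem exists_other (hu : u ∈ S) (hG : G.Adj u x)
    (hrk : 1 ≤ rank (group G T S x (toward T u x)) u) :
    ∃ w ∈ S, w ≠ u ∧ G.Adj w x ∧ toward T u x = toward T w x := by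
  have h1 := rank_lt (mem_group.2 ⟨hu, hG, rfl⟩ : u ∈ group G T S x (toward T u x))
  obtain ⟨w, hw, hwu⟩ := Finset.exists_mem_ne
    (show 1 < (group G T S x (toward T u x)).card by omega) u
  obtain ⟨w1, w2, w3⟩ := mem_group.1 hw
  exact ⟨w, w1, hwu, w2, w3.symm⟩

/-- If another vertex of `S` shares the first step, the path contains no neighbours of leaves. -/
theorem silent (h : Spread G T s l S r) (hu : u ∈ S) (hG : G.Adj u x)
    (hrk : 1 ≤ rank (group G T S x (toward T u x)) u) {t : ℕ} (ht1 : 1 ≤ t) (ht : t ≤ l) {v : V}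
    (hv : v ∈ leaves T) : ¬ G.Adj v ((toward T u)^[t] x) := by
  obtain ⟨w, hw, hwu, hwG, e⟩ := exists_other hu hG hrk
  by_cases hvu : v = u
  · rw [(h.shared (h.subset hu) (h.subset hw) hwu.symm hG e (by omega)).1]
    exact (h.gap (h.subset hw) hwG ht1 ht).2 v hv (hvu ▸ hwu.symm)
  · exact (h.gap (h.subset hu) hG ht1 ht).2 v hv hvu

theorem iterate_ne (h : Spread G T s l S r) (hu : u ∈ S) (hG : G.Adj u x) {t : ℕ}
    (ht : t < offset G T S r x u) : (toward T u)^[t] x ≠ u := by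
  have hle := h.offset_le hu hG
  rcases Nat.eq_zero_or_pos t with rfl | h0
  · exact hG.ne'
  have hrk : 1 ≤ rank (group G T S x (toward T u x)) u := by
    unfold offset at ht
    split_ifs at ht <;> omega
  obtain ⟨w, hw, hwu, -, e⟩ := exists_other hu hG hrk
  exact (h.shared (h.subset hu) (h.subset hw) hwu.symm hG e (by omega)).2.1

theorem adj_step (h : Spread G T s l S r) (hu : u ∈ S) (hG : G.Adj u x) {t : ℕ}
    (ht : t < offset G T S r x u) : T.Adj ((toward T u)^[t] x) ((toward T u)^[t + 1] x) :=
  h.iterate_adj (h.mem_s hu) (h.nbr (h.subset hu) hG) (h.iterate_ne hu hG ht)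

theorem step_ne (h : Spread G T s l S r) (hu : u ∈ S) (hG : G.Adj u x) {t : ℕ}
    (ht : t < offset G T S r x u) : (toward T u)^[t + 2] x ≠ (toward T u)^[t] x := by
  have := h.not_toward (h.mem_s hu) (h.adj_step hu hG ht) (Function.iterate_succ_apply' ..).symm
  rwa [← Function.iterate_succ_apply' (toward T u)] at this

/-- If the root lies on the other side of `x`, it sees the path to `u` in reverse. -/
theorem toward_root (h : Spread G T s l S r) (hu : u ∈ S) (hG : G.Adj u x)
    (hne : toward T u x ≠ toward T r x) {t : ℕ} (ht : t < offset G T S r x u) :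
    toward T r ((toward T u)^[t + 1] x) = (toward T u)^[t] x := by
  induction t with
  | zero => exact (h.toward_or (h.mem_s h.root) (h.adj_step hu hG ht)).resolve_left hne.symm
  | succ t ih =>
    refine (h.toward_or (h.mem_s h.root) (h.adj_step hu hG ht)).resolve_left ?_
    rw [ih (by omega)]
    exact (h.step_ne hu hG (by omega)).symm

theorem iterate_ne_root (h : Spread G T s l S r) (hu : u ∈ S) (hG : G.Adj u x) {t : ℕ}
    (ht : t ≤ offset G T S r x u) : (toward T u)^[t] x ≠ r := by
  have hle := h.offset_le hu hG
  rcases t with _ | t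
  · rintro rfl
    exact h.indep (h.subset hu) (h.subset h.root) hG
  by_cases e : toward T u x = toward T r x
  · by_cases hur : u = r
    · subst hur
      have hrk : 1 ≤ rank (group G T S x (toward T u x)) u := by
        unfold offset at ht
        rw [if_pos rfl] at ht
        omega
      obtain ⟨w, hw, hwu, -, e'⟩ := exists_other hu hG hrk
      exact (h.shared (h.subset hu) (h.subset hw) hwu.symm hG e' (by omega)).2.1
    · exact (h.shared (h.subset hu) (h.subset h.root) hur hG e (by omega)).2.2
  · intro e'
    have := h.toward_root hu hG e (t := t) (by omega)
    rw [e', toward_self] at this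
    exact (h.adj_step hu hG (t := t) (by omega)).ne (this.symm.trans e'.symm)

/-- Two of the shifted paths do not meet while running in opposite directions. -/
theorem not_opposite (h : Spread G T s l S r) (hu : u ∈ S) (hG : G.Adj u x) (hu' : u' ∈ S)
    (hG' : G.Adj u' x') {b b' : ℕ} (hb : b < offset G T S r x u)
    (hb' : b' < offset G T S r x' u')
    (he : (toward T u)^[b + 1] x = (toward T u')^[b' + 1] x') :
    (toward T u)^[b] x = (toward T u')^[b'] x' := by
  classical
  by_contra hpq
  have hle := h.offset_le hu hG
  have hle' := h.offset_le hu' hG'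
  have hp := h.adj_step hu hG hb
  have hq := h.adj_step hu' hG' hb'
  have hv := (h.gap (h.subset hu) hG (t := b + 1) (by omega) (by omega)).1
  have hpv : toward T u ((toward T u)^[b] x) = (toward T u)^[b + 1] x :=
    (Function.iterate_succ_apply' ..).symm
  have hqv : toward T u' ((toward T u')^[b'] x') = (toward T u)^[b + 1] x := by
    rw [he]; exact (Function.iterate_succ_apply' ..).symm
  rw [← he] at hq
  have hvl : (toward T u)^[b + 1] x ∉ leaves T := notMem_leaves_of_two hp.symm hq.symm hpq
  have hvne : ∀ w ∈ S, (toward T u)^[b + 1] x ≠ w := by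
    rintro w hw e
    exact hvl (e ▸ h.subset hw)
  have hvq := h.toward_pass (h.mem_s hu) hp hq.symm hpq hv (hvne u hu) hpv
  have huu : u ≠ u' := by
    rintro rfl
    exact h.not_toward (h.mem_s hu) hq hqv hvq
  have hrev : ∀ n i, i + n = b' →
      toward T u ((toward T u')^[i + 1] x') = (toward T u')^[i] x' := by
    intro n
    induction n with
    | zero =>
      rintro i rfl
      rw [← he]
      exact hvq
    | succ n ih =>
      intro i hi
      have h1 := h.adj_step hu' hG' (t := i + 1) (by omega)
      have h2 := h.adj_step hu' hG' (t := i) (by omega)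
      have h3 := h.step_ne hu' hG' (t := i) (by omega)
      refine h.toward_pass (h.mem_s hu) h1.symm h2.symm h3
        (h.gap (h.subset hu') hG' (by omega) (by omega)).1 ?_ (ih (i + 1) (by omega))
      intro e
      exact notMem_leaves_of_two h1 h2.symm h3 (e ▸ h.subset hu)
  have hback : ∀ n ≤ b' + 1, (toward T u)^[n] ((toward T u')^[n] x') = x' := by
    intro n
    induction n with
    | zero => exact fun _ => rfl
    | succ n ih =>
      intro hn
      rw [Function.iterate_succ_apply, hrev (b' - n) n (by omega)]
      exact ih (by omega)
  have hlong : l < b' + 1 + (b + 1) := by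
    by_contra! hc
    have := (h.gap (h.subset hu) hG (t := b' + 1 + (b + 1)) (by omega) hc).2 u' (h.subset hu')
      huu.symm
    rw [Function.iterate_add_apply, he, hback _ le_rfl] at this
    exact this hG'
  have hfwd : ∀ {u x b w}, u ∈ S → G.Adj u x → b ≤ l → w ∈ group G T S x (toward T u x) →
      toward T w ((toward T u)^[b] x) = (toward T u)^[b + 1] x := by
    intro u x b w hu hG hb hw
    obtain ⟨w1, w2, w3⟩ := mem_group.1 hw
    by_cases hwu : w = u
    · rw [hwu, Function.iterate_succ_apply']
    · have h1 := fun t => h.shared (h.subset hu) (h.subset w1) (Ne.symm hwu) hG w3.symm (t := t)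
      rw [(h1 b (by omega)).1, (h1 (b + 1) (by omega)).1,
        Function.iterate_succ_apply']
  have hdisj : Disjoint (group G T S x (toward T u x)) (group G T S x' (toward T u' x')) := by
    rw [Finset.disjoint_left]
    intro w hw hw'
    have hwS := (mem_group.1 hw).1
    have e1 := hfwd hu hG (b := b) (by omega) hw
    have e2 := hfwd hu' hG' (b := b') (by omega) hw'
    rw [← he] at e2
    exact h.not_toward (h.mem_s hwS) hq e2
      (h.toward_pass (h.mem_s hwS) hp hq.symm hpq hv (hvne w hwS) e1)
  have hcard : (group G T S x (toward T u x)).card + (group G T S x' (toward T u' x')).card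
      ≤ S.card := by
    rw [← Finset.card_union_of_disjoint hdisj]
    exact Finset.card_le_card (Finset.union_subset (fun w hw => (mem_group.1 hw).1)
      fun w hw => (mem_group.1 hw).1)
  have c1 := rank_lt (mem_group.2 ⟨hu, hG, rfl⟩ : u ∈ group G T S x (toward T u x))
  have c2 := rank_lt (mem_group.2 ⟨hu', hG', rfl⟩ : u' ∈ group G T S x' (toward T u' x'))
  have c3 := h.card_le
  have e1 : toward T u x ≠ toward T r x := by
    intro e
    have hb0 := hb
    have hb0' := hb'
    unfold offset at hb0 hb0'
    rw [if_pos e] at hb0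
    split_ifs at hb0' <;> omega
  have e2 : toward T u' x' ≠ toward T r x' := by
    intro e
    have hb0 := hb
    have hb0' := hb'
    unfold offset at hb0 hb0'
    rw [if_pos e] at hb0'
    split_ifs at hb0 <;> omega
  have r1 := h.toward_root hu hG e1 hb
  have r2 := h.toward_root hu' hG' e2 hb'
  rw [← he] at r2
  exact hpq (r1.symm.trans r2)

theorem not_start (h : Spread G T s l S r) (hu : u ∈ S) (hG : G.Adj u x) (hu' : u' ∈ S)
    (hG' : G.Adj u' x') {b' : ℕ} (hoff : offset G T S r x' u' = b' + 1 + offset G T S r x u) :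
    x ≠ (toward T u')^[b' + 1] x' := by
  intro hx
  have hle' := h.offset_le hu' hG'
  by_cases huu : u = u'
  · subst huu
    have hrk : ¬ 1 ≤ rank (group G T S x' (toward T u x')) u := fun hrk =>
      h.silent hu hG' hrk (t := b' + 1) (by omega) (by omega) (h.subset hu) (hx ▸ hG)
    have hadj := h.adj_step hu hG' (t := 0) (by omega)
    have hoff' := hoff
    unfold offset at hoff'
    split_ifs at hoff' with e1 e2 e2 <;> try omega
    obtain rfl : b' = 0 := by omega
    rw [zero_add, Function.iterate_one] at hx hadj
    rw [Function.iterate_zero_apply, ← hx] at hadj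
    rw [← hx] at e1
    have := (h.toward_or (h.mem_s h.root) hadj).resolve_left (Ne.symm e1)
    exact h.not_toward (h.mem_s hu) hadj hx.symm (e2.trans this)
  · have := (h.gap (h.subset hu') hG' (t := b' + 1) (by omega) (by omega)).2 u (h.subset hu) huu
    rw [← hx] at this
    exact this hG

theorem shift_inj_aux (h : Spread G T s l S r) (hu : u ∈ S) (hG : G.Adj u x) (hu' : u' ∈ S)
    (hG' : G.Adj u' x') (a : ℕ) : ∀ a', a ≤ offset G T S r x u → a' ≤ offset G T S r x' u' →
    a + offset G T S r x' u' = a' + offset G T S r x u →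
    (toward T u)^[a] x = (toward T u')^[a'] x' →
    (a < offset G T S r x u → (toward T u)^[a + 1] x = (toward T u')^[a' + 1] x') →
    u = u' ∧ x = x' := by
  induction a with
  | zero =>
    rintro (_ | b') ha ha' hoff e hnext
    · obtain rfl : x = x' := e
      refine ⟨?_, rfl⟩
      have hoff0 : offset G T S r x u' = offset G T S r x u := by omega
      have hdir : toward T u x = toward T u' x := by
        rcases Nat.eq_zero_or_pos (offset G T S r x u) with h0 | h0
        · have h0' := hoff0.trans h0
          unfold offset at h0 h0'
          split_ifs at h0 h0' with e1 e2
          exact e1.trans e2.symm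
        · exact hnext h0
      unfold offset at hoff0
      rw [hdir] at hoff0
      exact rank_inj (mem_group.2 ⟨hu, hG, hdir⟩) (mem_group.2 ⟨hu', hG', rfl⟩) (by omega)
    · exact absurd e (h.not_start hu hG hu' hG' (by omega))
  | succ b ih =>
    rintro (_ | b') ha ha' hoff e hnext
    · exact absurd e.symm (h.not_start hu' hG' hu hG (by omega))
    · exact ih b' (by omega) (by omega) (by omega)
        (h.not_opposite hu hG hu' hG' (by omega) (by omega) e) fun _ => e

theorem shift_inj (h : Spread G T s l S r) (hu : u ∈ S) (hG : G.Adj u x) (hu' : u' ∈ S)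
    (hG' : G.Adj u' x') (e : (toward T u)^[offset G T S r x u] x =
      (toward T u')^[offset G T S r x' u'] x') : u = u' ∧ x = x' :=
  h.shift_inj_aux hu hG hu' hG' _ _ le_rfl le_rfl (Nat.add_comm _ _) e
    fun hlt => absurd hlt (lt_irrefl _)

theorem tail_ne_root (h : Spread G T s l S r) (hj : j ∈ leaves T) (hjr : j ≠ r) {t : ℕ}
    (ht : t < l) : (toward T r)^[t] j ≠ r := by
  rcases Nat.eq_zero_or_pos t with rfl | h0
  · exact hjr
  · intro e
    refine (h.tail hj hjr ht).2.1 h0 ?_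
    rw [e]
    exact h.subset h.root

theorem tail_adj (h : Spread G T s l S r) (hj : j ∈ leaves T) (hjr : j ≠ r) {t : ℕ}
    (ht : t < l) : T.Adj ((toward T r)^[t] j) ((toward T r)^[t + 1] j) :=
  h.iterate_adj (h.mem_s h.root) (leaves_subset h.toTreeOn hj) (h.tail_ne_root hj hjr ht)

theorem tail_step_ne (h : Spread G T s l S r) (hj : j ∈ leaves T) (hjr : j ≠ r) {t : ℕ}
    (ht : t < l) : (toward T r)^[t + 2] j ≠ (toward T r)^[t] j := by
  have := h.not_toward (h.mem_s h.root) (h.tail_adj hj hjr ht)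
    (Function.iterate_succ_apply' ..).symm
  rwa [← Function.iterate_succ_apply' (toward T r)] at this

theorem toward_tail (h : Spread G T s l S r) (hj : j ∈ leaves T) (hjr : j ≠ r) {i : V}
    (hi : i ∈ leaves T) (hij : i ≠ j) {t : ℕ} (ht : t < l) :
    toward T i ((toward T r)^[t] j) = (toward T r)^[t + 1] j := by
  have his := leaves_subset h.toTreeOn hi
  induction t with
  | zero =>
    exact leaf_unique hj (h.toward_spec his (leaves_subset h.toTreeOn hj) hij.symm).1
      (h.tail_adj hj hjr ht)
  | succ t ih =>
    refine h.toward_pass his (h.tail_adj hj hjr (by omega)) (h.tail_adj hj hjr ht)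
      (h.tail_step_ne hj hjr (by omega)).symm (h.tail hj hjr ht).1 ?_ (ih (by omega))
    rintro e
    exact (h.tail hj hjr ht).2.1 (by omega) (e ▸ hi)

theorem shift_ne_tail (h : Spread G T s l S r) (hu : u ∈ S) (hG : G.Adj u x)
    (hj : j ∈ leaves T) (hjS : j ∉ S) {a : ℕ} (ha : a ≤ offset G T S r x u) :
    ∀ t < l, (toward T u)^[a] x ≠ (toward T r)^[t] j := by
  have hjr : j ≠ r := by rintro rfl; exact hjS h.root
  have huj : u ≠ j := by rintro rfl; exact hjS hu
  induction a with
  | zero =>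
    intro t ht e
    rw [Function.iterate_zero_apply] at e
    exact (h.tail hj hjr ht).2.2 u (h.subset hu) huj (e ▸ hG)
  | succ a ih =>
    intro t ht e
    have hq := h.adj_step hu hG (t := a) (by omega)
    have hdir := h.toward_tail hj hjr (h.subset hu) huj ht
    have hne := h.not_toward (h.mem_s hu) hq (Function.iterate_succ_apply' ..).symm
    have hadj := h.tail_adj hj hjr ht
    rw [e] at hq hne
    rw [hdir] at hne
    rcases t with _ | t
    · exact hne (leaf_unique hj hadj hq.symm)
    · rcases (h.tail hj hjr ht).1 hadj (h.tail_adj hj hjr (t := t) (by omega)).symm hq.symm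
        with e' | e' | e'
      · exact h.tail_step_ne hj hjr (by omega) e'
      · exact hne e'
      · exact ih (by omega) t (by omega) e'.symm

theorem tail_inj (h : Spread G T s l S r) {j' : V} (hj : j ∈ leaves T) (hjr : j ≠ r)
    (hj' : j' ∈ leaves T) (hjr' : j' ≠ r) {t : ℕ} (ht : t < l) : ∀ t' < l,
    (toward T r)^[t] j = (toward T r)^[t'] j' → j = j' ∧ t = t' := by
  induction t with
  | zero =>
    rintro (_ | t') ht' e
    · exact ⟨e, rfl⟩
    · exact absurd (e ▸ hj) ((h.tail hj' hjr' ht').2.1 (by omega))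
  | succ t ih =>
    rintro (_ | t') ht' e
    · exact absurd (e ▸ hj') ((h.tail hj hjr ht).2.1 (by omega))
    · have h1 := h.tail_adj hj hjr ht
      have h2 := h.tail_adj hj hjr (t := t) (by omega)
      have h3 := h.tail_adj hj' hjr' (t := t') (by omega)
      have h4 := h.tail_step_ne hj hjr (t := t) (by omega)
      have h5 := h.tail_step_ne hj' hjr' (t := t') (by omega)
      rw [Function.iterate_succ_apply' _ (t' + 1), ← e,
        ← Function.iterate_succ_apply' (toward T r)] at h5
      rw [← e] at h3
      rcases (h.tail hj hjr ht).1 h1 h2.symm h3.symm with e' | e' | e'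
      · exact absurd e' h4
      · exact absurd e' h5
      · obtain ⟨i1, i2⟩ := ih (by omega) t' (by omega) e'
        exact ⟨i1, by omega⟩

/-- Shifted neighbours, the vertices near the remaining leaves, and the root are distinct. -/
theorem sum_degree_add_le [Fintype V] [DecidableRel G.Adj] (h : Spread G T s l S r) :
    ∑ u ∈ S, G.degree u + l * ((leaves T).ncard - S.card) + 1 ≤ s.ncard := by
  classical
  set A : Finset V := (S.sigma fun u => G.neighborFinset u).image
    fun p : (_ : V) × V => (toward T p.1)^[offset G T S r p.2 p.1] p.2 with hA
  set L : Finset V := (leaves T).toFinset with hL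
  set B : Finset V := ((L \ S) ×ˢ Finset.range l).image
    fun p => (toward T r)^[p.2] p.1 with hB
  have hSL : S ⊆ L := fun u hu => by simpa [hL] using h.subset hu
  have hBmem : ∀ p ∈ (L \ S) ×ˢ Finset.range l,
      p.1 ∈ leaves T ∧ p.1 ∉ S ∧ p.1 ≠ r ∧ p.2 < l := by
    rintro ⟨j, t⟩ hp
    simp only [hL, Finset.mem_product, Finset.mem_sdiff, Set.mem_toFinset, Finset.mem_range] at hp
    exact ⟨hp.1.1, hp.1.2, fun e => hp.1.2 (show j ∈ S from (show j = r from e) ▸ h.root), hp.2⟩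
  have cA : A.card = ∑ u ∈ S, G.degree u := by
    rw [hA, Finset.card_image_of_injOn, Finset.card_sigma]
    · simp
    · rintro ⟨u, x⟩ hp ⟨u', x'⟩ hp' e
      simp only [Finset.coe_sigma, Set.mem_sigma_iff, Finset.mem_coe,
        SimpleGraph.mem_neighborFinset] at hp hp'
      obtain ⟨rfl, rfl⟩ := h.shift_inj hp.1 hp.2 hp'.1 hp'.2 e
      rfl
  have cB : B.card = l * ((leaves T).ncard - S.card) := by
    rw [hB, Finset.card_image_of_injOn, Finset.card_product, Finset.card_sdiff_of_subset hSL,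
      Finset.card_range, Set.ncard_eq_toFinset_card', mul_comm]
    intro p hp p' hp' e
    obtain ⟨a1, -, a2, a3⟩ := hBmem p hp
    obtain ⟨b1, -, b2, b3⟩ := hBmem p' hp'
    exact Prod.ext_iff.2 (h.tail_inj a1 a2 b1 b2 a3 _ b3 e)
  have dAB : Disjoint A B := by
    rw [Finset.disjoint_left]
    intro z hz hz'
    obtain ⟨⟨u, x⟩, hp, rfl⟩ := Finset.mem_image.1 hz
    obtain ⟨q, hq, e⟩ := Finset.mem_image.1 hz'
    simp only [Finset.mem_sigma, SimpleGraph.mem_neighborFinset] at hp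
    obtain ⟨b1, b2, -, b3⟩ := hBmem q hq
    exact h.shift_ne_tail hp.1 hp.2 b1 b2 le_rfl _ b3 e.symm
  have hr : r ∉ A ∪ B := by
    intro hz
    rcases Finset.mem_union.1 hz with hz | hz
    · obtain ⟨⟨u, x⟩, hp, e⟩ := Finset.mem_image.1 hz
      simp only [Finset.mem_sigma, SimpleGraph.mem_neighborFinset] at hp
      exact h.iterate_ne_root hp.1 hp.2 le_rfl e
    · obtain ⟨q, hq, e⟩ := Finset.mem_image.1 hz
      obtain ⟨b1, -, b2, b3⟩ := hBmem q hq
      exact h.tail_ne_root b1 b2 b3 e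
  have hsub : ((insert r (A ∪ B) : Finset V) : Set V) ⊆ s := by
    intro z hz
    rcases Finset.mem_insert.1 (Finset.mem_coe.1 hz) with rfl | hz
    · exact h.mem_s h.root
    rcases Finset.mem_union.1 hz with hz | hz
    · obtain ⟨⟨u, x⟩, hp, rfl⟩ := Finset.mem_image.1 hz
      simp only [Finset.mem_sigma, SimpleGraph.mem_neighborFinset] at hp
      exact h.iterate_mem (h.mem_s hp.1) (h.nbr (h.subset hp.1) hp.2) _
    · obtain ⟨q, hq, rfl⟩ := Finset.mem_image.1 hz
      exact h.iterate_mem (h.mem_s h.root) (leaves_subset h.toTreeOn (hBmem q hq).1) _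
  have := Set.ncard_le_ncard hsub
  rwa [Set.ncard_coe_finset, Finset.card_insert_of_notMem hr, Finset.card_union_of_disjoint dAB,
    cA, cB] at this

end Spread

/-- In a largest `(k + 1)`-ended tree, all neighbours of leaves belong to the tree. -/
theorem GoodTree.mem_of_adj_leaf [Finite V] {G T : SimpleGraph V} {s : Set V} {k : ℕ}
    (h : GoodTree G k T s) (hmax : maxKEndedOrder G (k + 1) ≤ s.ncard) {u v : V}
    (hu : u ∈ leaves T) (huv : G.Adj u v) : v ∈ s := by
  by_contra hv
  have hus := leaves_subset h.toTreeOn hu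
  have htree := h.attach hus hv
  have hadj : ∀ a b, (T ⊔ SimpleGraph.edge u v).Adj a b ↔
      T.Adj a b ∨ (a = u ∧ b = v ∨ a = v ∧ b = u) := by
    intro a b
    rw [SimpleGraph.sup_adj, SimpleGraph.edge_adj]
    have := huv.ne
    grind
  have hsub : leaves (T ⊔ SimpleGraph.edge u v) ⊆ insert v (leaves T \ {u}) := by
    intro w hw
    by_cases hwv : w = v
    · exact .inl hwv
    have hwu : w ≠ u := by
      rintro rfl
      obtain ⟨a, ha, -⟩ := hu
      have hav : a = v := leaf_unique hw ((hadj w a).2 (.inl ha)) ((hadj w v).2 (by simp))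
      exact hv (hav ▸ h.mem ha.symm)
    refine .inr ⟨(mem_leaves_congr fun y => ?_).1 hw, hwu⟩
    rw [hadj]
    tauto
  have hcard : (leaves (T ⊔ SimpleGraph.edge u v)).ncard ≤ k + 1 := by
    have h1 := Set.ncard_le_ncard hsub
    have h2 := Set.ncard_insert_le v (leaves T \ {u})
    have h3 := Set.ncard_sdiff_singleton_add_one hu
    have h4 := h.ncard_leaves
    omega
  have hle : T ⊔ SimpleGraph.edge u v ≤ G := by
    intro a b hab
    rcases (hadj a b).1 hab with e | ⟨rfl, rfl⟩ | ⟨rfl, rfl⟩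
    · exact h.le e
    · exact huv
    · exact huv.symm
  have := htree.ncard_le hle (Set.insert_nonempty _ _) hcard
  rw [Set.ncard_insert_of_notMem hv] at this
  omega

/-- If `t_k < t_{k+1}`, some largest `(k + 1)`-ended tree is a tree in the proper sense. -/
theorem exists_goodTree [Finite V] {G : SimpleGraph V} {k : ℕ} (hk : 1 ≤ k)
    (hlt : maxKEndedOrder G k < maxKEndedOrder G (k + 1)) :
    ∃ T s, GoodTree G k T s ∧ s.ncard = maxKEndedOrder G (k + 1) := by
  have hne : {n | ∃ H : G.Subgraph, IsKEndedTree G (k + 1) H ∧ H.verts.ncard = n}.Nonempty := by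
    rw [Set.nonempty_iff_ne_empty]
    intro e
    rw [maxKEndedOrder, maxKEndedOrder, e] at hlt
    simp at hlt
  obtain ⟨H, hH, hcard⟩ := Nat.sSup_mem hne (bddAbove_orders G (k + 1))
  change H.verts.ncard = maxKEndedOrder G (k + 1) at hcard
  rcases hH with ⟨htree, hends⟩ | ⟨-, hcycle⟩
  · exact ⟨H.spanningCoe, H.verts, ⟨treeOn_spanningCoe htree, H.spanningCoe_le,
      ncard_leaves_spanningCoe.trans hends, by omega⟩, hcard⟩
  · have : H.verts.ncard ≤ maxKEndedOrder G k :=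
      le_csSup (bddAbove_orders G k) ⟨H, .inr ⟨hk, hcycle⟩, rfl⟩
    omega

/-- **Corollary 3.** If `G` is connected of order `n`, `k, λ, m` are positive
integers with `m ≤ min{k, λ} + 1`, and `σ_m ≥ n - λ(k - m + 1)`, then
`t_k ≥ t_{k+1} - λ + 1`. -/
theorem corollary3 [Fintype V] (G : SimpleGraph V) [DecidableRel G.Adj]
    (hG : G.Connected) (k l m : ℕ) (hk : 1 ≤ k) (hl : 1 ≤ l) (hm : 1 ≤ m)
    (hmk : m ≤ k + 1) (hml : m ≤ l + 1)
    (h : (Fintype.card V : ℕ∞) ≤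
      minDegreeSum G m + ((l * (k + 1 - m) : ℕ) : ℕ∞)) :
    maxKEndedOrder G k + l ≥ maxKEndedOrder G (k + 1) + 1 := by
  by_contra! hlt
  obtain ⟨T, s, hT, hs⟩ := exists_goodTree (G := G) hk (by omega)
  have hls : maxKEndedOrder G k + l ≤ s.ncard := by omega
  have hleaves : (leaves T).ncard = k + 1 := le_antisymm hT.ncard_leaves hT.lt_ncard_leaves
  obtain ⟨S', hS', hcard⟩ := Set.exists_subset_card_eq (hleaves ▸ hmk)
  obtain ⟨S, rfl⟩ := (Set.toFinite S').exists_finset_coe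
  rw [Set.ncard_coe_finset] at hcard
  obtain ⟨r, hr⟩ : S.Nonempty := Finset.card_pos.1 (by omega)
  have hnbr : ∀ ⦃u x⦄, u ∈ leaves T → G.Adj u x → x ∈ s := fun u x hu hux =>
    hT.mem_of_adj_leaf hs.ge hu hux
  have hspread : Spread G T s l S r :=
    { toTreeOn := hT.toTreeOn
      nbr := hnbr
      indep := fun u v hu hv => hT.leaves_indep hk hu hv
      gap := fun u x t hu hux => hT.gap hk hls hu (hnbr hu hux) hux
      tail := fun j t hj hjr ht => hT.tail hk hls hj (hS' hr) hjr ht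
      subset := fun u hu => hS' hu
      root := hr
      card_le := by omega }
  have hcount := hspread.sum_degree_add_le
  rw [hleaves, hcard] at hcount
  have hsV : s.ncard ≤ Fintype.card V := Nat.card_eq_fintype_card (α := V) ▸ Set.ncard_le_card s
  have hsum : minDegreeSum G m ≤ ((∑ u ∈ S, G.degree u : ℕ) : ℕ∞) := by
    push_cast
    exact iInf₂_le S ⟨hcard, fun u hu v hv => hT.leaves_indep hk (hS' hu) (hS' hv)⟩
  have hfin := h.trans (add_le_add_left hsum _)
  norm_cast at hfin
  omega
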